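/- The bijective witness preserves chain membership: for every p ∈ P, the chain elements Sum.inl p and Sum.inr (h p) belong to the same chain, i.e., Sum.inl p ⊑ Sum.inr (h p) or Sum.inr (h p) ⊑ Sum.inl p. -/

import Mathlib

def SB.Valid {α β : Type*} (P : Set α) (Q : Set β) : α ⊕ β → Prop
  | Sum.inl p => p ∈ P
  | Sum.inr q => q ∈ Q

def SB.step {α β : Type*} (f : α → β) (g : β → α) : α ⊕ β → α ⊕ β
  | Sum.inl p => Sum.inr (f p)
  | Sum.inr q => Sum.inl (g q)

def SB.ChainLE {α β : Type*} (f : α → β) (g : β → α) : α ⊕ β → α ⊕ β → Prop :=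
  Relation.ReflTransGen (fun x y => y = SB.step f g x)

def SB.Initial {α β : Type*} (P : Set α) (Q : Set β) (f : α → β) (g : β → α) :
    α ⊕ β → Prop
  | Sum.inl p => p ∉ g '' Q
  | Sum.inr q => q ∉ f '' P

def SB.InQStopper {α β : Type*} (P : Set α) (Q : Set β) (f : α → β) (g : β → α)
    (x : α ⊕ β) : Prop :=
  ∃ q ∈ Q, SB.Initial P Q f g (Sum.inr q) ∧ SB.ChainLE f g (Sum.inr q) x

open Classical in
noncomputable def SB.h {α β : Type*} (P : Set α) (Q : Set β) (f : α → β)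
    (g : β → α) (p : α) : β :=
  if hq : SB.InQStopper P Q f g (Sum.inl p) then
    haveI : Nonempty β := ⟨hq.choose⟩
    Function.invFunOn g Q p
  else f p

/-! If `p` lies in a `Q`-stopper, its chain starts on the `Q` side, so `p` is not the starting point
and has a predecessor, which lies in `Q` because `step` preserves validity. Hence `invFunOn` takes
no junk value: `h p` is a `g`-preimage of `p`, and one step leads from `h p` to `p`. Otherwise
`h p = f p`, and one step leads from `p` to `h p`. -/

namespace SB

variable {α β : Type*} {P : Set α} {Q : Set β} {f : α → β} {g : β → α}

theorem Valid.step (hf : Set.MapsTo f P Q) (hg : Set.MapsTo g Q P) :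
    ∀ {x : α ⊕ β}, Valid P Q x → Valid P Q (step f g x)
  | Sum.inl _, hx => hf hx
  | Sum.inr _, hx => hg hx

theorem Valid.of_chainLE (hf : Set.MapsTo f P Q) (hg : Set.MapsTo g Q P) {x y : α ⊕ β}
    (hx : Valid P Q x) (hxy : ChainLE f g x y) : Valid P Q y := by
  induction hxy with
  | refl => exact hx
  | tail _ hstep ih => exact hstep ▸ ih.step hf hg

theorem chainLE_step (f : α → β) (g : β → α) (x : α ⊕ β) : ChainLE f g x (step f g x) :=
  Relation.ReflTransGen.single rfl

theorem ChainLE.exists_apply_eq_of_inr_inl {q : β} {p : α}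
    (hqp : ChainLE f g (Sum.inr q) (Sum.inl p)) :
    ∃ b, ChainLE f g (Sum.inr q) (Sum.inr b) ∧ g b = p := by
  obtain heq | ⟨x, hqx, hxp⟩ := Relation.ReflTransGen.cases_tail hqp
  · cases heq
  · cases x with
    | inl a => cases hxp
    | inr b => exact ⟨b, hqx, (Sum.inl.inj hxp).symm⟩

theorem InQStopper.mem_image (hf : Set.MapsTo f P Q) (hg : Set.MapsTo g Q P) {p : α}
    (hp : InQStopper P Q f g (Sum.inl p)) : p ∈ g '' Q := by
  obtain ⟨q, hq, -, hqp⟩ := hp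
  obtain ⟨b, hqb, hbp⟩ := hqp.exists_apply_eq_of_inr_inl
  have hb : Valid P Q (Sum.inr b) := Valid.of_chainLE hf hg (x := Sum.inr q) hq hqb
  exact ⟨b, hb, hbp⟩

theorem h_of_not_inQStopper {p : α} (hp : ¬ InQStopper P Q f g (Sum.inl p)) :
    h P Q f g p = f p :=
  dif_neg hp

theorem InQStopper.apply_h (hf : Set.MapsTo f P Q) (hg : Set.MapsTo g Q P) {p : α}
    (hp : InQStopper P Q f g (Sum.inl p)) : g (h P Q f g p) = p := by
  have : Nonempty β := ⟨hp.choose⟩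
  rw [h, dif_pos hp]
  exact Function.invFunOn_eq (hp.mem_image hf hg)

end SB

theorem h_preserves_chain_general {α β : Type*} {P : Set α} {Q : Set β}
    {f : α → β} {g : β → α} (hfm : Set.MapsTo f P Q) (hgm : Set.MapsTo g Q P) (p : α) :
    SB.ChainLE f g (Sum.inl p) (Sum.inr (SB.h P Q f g p)) ∨
      SB.ChainLE f g (Sum.inr (SB.h P Q f g p)) (Sum.inl p) := by
  by_cases hp : SB.InQStopper P Q f g (Sum.inl p)
  · right
    simpa only [SB.step, hp.apply_h hfm hgm] using
      SB.chainLE_step f g (Sum.inr (SB.h P Q f g p))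
  · left
    rw [SB.h_of_not_inQStopper hp]
    exact SB.chainLE_step f g (Sum.inl p)

theorem h_preserves_chain {α β : Type*} (P : Set α) (Q : Set β)
    (f : α → β) (g : β → α)
    (hfm : Set.MapsTo f P Q) (hfi : Set.InjOn f P)
    (hgm : Set.MapsTo g Q P) (hgi : Set.InjOn g Q)
    (p : α) (hp : p ∈ P) :
    SB.ChainLE f g (Sum.inl p) (Sum.inr (SB.h P Q f g p)) ∨
      SB.ChainLE f g (Sum.inr (SB.h P Q f g p)) (Sum.inl p) :=
  h_preserves_chain_general hfm hgm p
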